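/- Let Ω_n be the polynomial de Rham algebra of the n-simplex. The map Ω_n^{≤1} → ∏_{Hom_Δ([1],[n])} Ω_1, induced by the restriction maps Δ((ij))*: Ω_n^{≤1} → Ω_1 along all morphisms (ij): [1] → [n] with i ≤ j, is injective on the subspace of forms of degree at most one whose coefficients are polynomials of degree at most one. -/

import Mathlib

/-! We model the polynomial de Rham algebra `Ωₙ` (generated by `t₀,…,tₙ` of degree
`0` and `dt₀,…,dtₙ` of degree `1` subject to `Σtᵢ = 1` and `Σdtᵢ = 0`) in degrees
`≤ 1` and with coefficients of polynomial degree `≤ 1` concretely, over a field of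
characteristic zero: a degree-`0` element of coefficient degree `≤ 1` is an affine
function on the affine hyperplane `Δₙ = {t : Σ tᵢ = 1}`, and a `1`-form with
affine coefficients is an affine family, parametrized by `Δₙ`, of linear
functionals on the tangent space `Vₙ = {v : Σ vᵢ = 0}`.  Over an infinite field
this identification is faithful.  The morphism `(ij) : [1] → [n]` of `Δ`
(`0 ↦ i`, `1 ↦ j`, `i ≤ j`) induces `φ*(t_l) = Σ_{φ(m)=l} s_m`, i.e. the affine
map `Δ₁ → Δₙ`, `s ↦ s₀·eᵢ + s₁·eⱼ`, along which functions and forms are pulled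
back. -/

/-- The points of the affine hyperplane `{t : Fin (n+1) → k | Σ tᵢ = 1}`
(carrying the geometric `n`-simplex). -/
def SimplexPts (k : Type) [Field k] (n : ℕ) : Type :=
  {t : Fin (n + 1) → k // ∑ i, t i = 1}

/-- The sum-of-coordinates functional. -/
noncomputable def sumCoords (k : Type) [Field k] (n : ℕ) :
    (Fin (n + 1) → k) →ₗ[k] k :=
  ∑ i : Fin (n + 1), LinearMap.proj i

/-- The space `Vₙ` of tangent vectors to the hyperplane `Σ tᵢ = 1`
(equivalently, the span of the `dtᵢ`-dual directions): vectors with `Σ vᵢ = 0`. -/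
noncomputable def TangentVecs (k : Type) [Field k] (n : ℕ) :
    Submodule k (Fin (n + 1) → k) :=
  LinearMap.ker (sumCoords k n)

/-- `f` is (the restriction to the hyperplane of) an affine function, i.e. a
polynomial of degree `≤ 1` in `t₀,…,tₙ`. -/
def IsAffineFn {k : Type} [Field k] {n : ℕ} (f : SimplexPts k n → k) : Prop :=
  ∃ F : (Fin (n + 1) → k) →ᵃ[k] k, ∀ t : SimplexPts k n, f t = F t.1

/-- `ω` is a `1`-form with coefficients of polynomial degree `≤ 1`: an affine
family of linear functionals on the tangent space. -/
def IsAffineForm {k : Type} [Field k] {n : ℕ}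
    (ω : SimplexPts k n → (↥(TangentVecs k n) →ₗ[k] k)) : Prop :=
  ∃ W : (Fin (n + 1) → k) →ᵃ[k] (↥(TangentVecs k n) →ₗ[k] k),
    ∀ t : SimplexPts k n, ω t = W t.1

section Edge

variable {k : Type} [Field k] {n : ℕ}

/-- The affine map `Δ₁ → Δₙ` induced by the morphism `(ij) : [1] → [n]` of `Δ`:
`s ↦ s₀·eᵢ + s₁·eⱼ` (i.e. `φ*(t_l) = Σ_{φ(m)=l} s_m`). -/
def edgePt (i j : Fin (n + 1)) (s : SimplexPts k 1) : SimplexPts k n :=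
  ⟨fun l => (if l = i then s.1 0 else 0) + (if l = j then s.1 1 else 0), by
    have h2 := s.2
    rw [Fin.sum_univ_two] at h2
    simp [Finset.sum_add_distrib, Finset.sum_ite_eq', h2]⟩

/-- The linear part of `edgePt`, on ambient coordinate vectors. -/
def edgeLin₀ (i j : Fin (n + 1)) : (Fin 2 → k) →ₗ[k] (Fin (n + 1) → k) where
  toFun v := fun l => (if l = i then v 0 else 0) + (if l = j then v 1 else 0)
  map_add' v w := by
    funext l
    by_cases h1 : l = i <;> by_cases h2 : l = j <;>
      simp [h1, h2] <;> split_ifs <;> ring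
  map_smul' c v := by
    funext l
    by_cases h1 : l = i <;> by_cases h2 : l = j <;>
      simp [h1, h2, mul_add] <;> split_ifs <;> ring

/-- The differential of the edge map `Δ₁ → Δₙ`, on tangent vectors. -/
noncomputable def edgeLin (i j : Fin (n + 1)) :
    ↥(TangentVecs k 1) →ₗ[k] ↥(TangentVecs k n) :=
  LinearMap.restrict (edgeLin₀ i j)
    (p := TangentVecs k 1) (q := TangentVecs k n) (fun v hv => by
      have h0 : ∑ m : Fin 2, v m = 0 := by
        simpa [sumCoords, TangentVecs, LinearMap.sum_apply] using hv
      rw [Fin.sum_univ_two] at h0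
      show sumCoords k n _ = 0
      simp [sumCoords, LinearMap.sum_apply, edgeLin₀, Finset.sum_add_distrib,
        Finset.sum_ite_eq', h0])

/-- Pullback of a function along the edge `(ij) : [1] → [n]`. -/
def pullFn (i j : Fin (n + 1)) (f : SimplexPts k n → k) : SimplexPts k 1 → k :=
  fun s => f (edgePt i j s)

/-- Pullback of a `1`-form along the edge `(ij) : [1] → [n]`. -/
noncomputable def pullForm (i j : Fin (n + 1))
    (ω : SimplexPts k n → (↥(TangentVecs k n) →ₗ[k] k)) :
    SimplexPts k 1 → (↥(TangentVecs k 1) →ₗ[k] k) :=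
  fun s => (ω (edgePt i j s)).comp (edgeLin i j)

end Edge

theorem affine_zero_aux {k : Type} [Field k] {n : ℕ} {M : Type} [AddCommGroup M] [Module k M]
    (A : (Fin (n + 1) → k) →ᵃ[k] M) (hA : ∀ i, A (Pi.single i 1) = 0)
    (t : Fin (n + 1) → k) (ht : ∑ i, t i = 1) : A t = 0 := by
  have key : ∀ x, A x = A.linear x + A 0 := fun x => by
    have := congrFun A.decomp x
    simpa using this
  have hl : ∀ i, A.linear (Pi.single i 1) = - A 0 := fun i => by
    have h1 := key (Pi.single i 1)
    rw [hA] at h1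
    exact eq_neg_of_add_eq_zero_left h1.symm
  rw [key, LinearMap.pi_apply_eq_sum_univ A.linear t]
  have h2 : ∀ i, A.linear (fun j => if i = j then (1 : k) else 0) = - A 0 := fun i => by
    rw [← hl i]
    congr 1
    funext j
    simp [Pi.single_apply, eq_comm]
  simp only [h2]
  rw [← Finset.sum_smul, ht]
  simp

/-- The vertex `e_i`. -/
def vertexPt (k : Type) [Field k] {n : ℕ} (i : Fin (n + 1)) : SimplexPts k n :=
  ⟨Pi.single i 1, by simp⟩

/-- The tangent vector `e_j - e_i`. -/
noncomputable def edgeVec (k : Type) [Field k] {n : ℕ} (i j : Fin (n + 1)) :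
    ↥(TangentVecs k n) :=
  ⟨Pi.single j 1 - Pi.single i 1, by
    show sumCoords k n _ = 0
    simp [sumCoords, LinearMap.sum_apply]⟩

theorem edgePt_zero {k : Type} [Field k] {n : ℕ} (i j : Fin (n + 1)) :
    edgePt i j (vertexPt k 0) = vertexPt k i := by
  apply Subtype.ext
  funext l
  simp [edgePt, vertexPt, Pi.single_apply]

theorem edgePt_one {k : Type} [Field k] {n : ℕ} (i j : Fin (n + 1)) :
    edgePt i j (vertexPt k 1) = vertexPt k j := by
  apply Subtype.ext
  funext l
  simp [edgePt, vertexPt, Pi.single_apply]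

theorem edgeLin_edgeVec {k : Type} [Field k] {n : ℕ} (i j : Fin (n + 1)) :
    edgeLin i j (edgeVec k 0 1) = edgeVec k i j := by
  apply Subtype.ext
  funext l
  simp [edgeLin, edgeLin₀, edgeVec, Pi.single_apply, LinearMap.restrict_apply]
  split_ifs <;> ring

theorem edgeVec_swap {k : Type} [Field k] {n : ℕ} (i j : Fin (n + 1)) :
    edgeVec k i j = - edgeVec k j i := by
  apply Subtype.ext
  simp [edgeVec]

theorem tangent_decomp {k : Type} [Field k] {n : ℕ} (i : Fin (n + 1))
    (v : ↥(TangentVecs k n)) : v = ∑ j, v.1 j • edgeVec k i j := by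
  have hv : ∑ j, v.1 j = 0 := by
    have h1 : sumCoords k n v.1 = 0 := v.2
    simpa [sumCoords, LinearMap.sum_apply] using h1
  apply Subtype.ext
  funext l
  simp [edgeVec, Finset.sum_apply, Pi.single_apply, mul_sub, Finset.sum_sub_distrib, hv,
    ← Finset.sum_mul]

/-! ### Statement

**Lemma** ([BGNT, Lemma 2.19] “lemma: restriction of forms on simplex”).  The map
`Ωₙ^{≤1} → ∏_{Hom_Δ([1],[n])} Ω₁`, induced by the restriction maps
`Δ((ij))* : Ωₙ^{≤1} → Ω₁` along all morphisms `(ij) : [1] → [n]` with `i ≤ j`,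
is injective on the subspace of forms of degree at most one whose coefficients
are polynomials of degree at most one. -/
theorem restriction_of_forms_on_simplex_injective
    (k : Type) [Field k] [CharZero k] (n : ℕ)
    (f g : SimplexPts k n → k)
    (ω η : SimplexPts k n → (↥(TangentVecs k n) →ₗ[k] k))
    (hf : IsAffineFn f) (hg : IsAffineFn g)
    (hω : IsAffineForm ω) (hη : IsAffineForm η)
    (h : ∀ i j : Fin (n + 1), i ≤ j →
        pullFn i j f = pullFn i j g ∧ pullForm i j ω = pullForm i j η) :
    f = g ∧ ω = η := by
  have hF : ∀ l, f (vertexPt k l) = g (vertexPt k l) := fun l => by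
    have h1 := congrFun (h l l le_rfl).1 (vertexPt k 0)
    simpa only [pullFn, edgePt_zero] using h1
  have hE : ∀ l j, ω (vertexPt k l) (edgeVec k l j) = η (vertexPt k l) (edgeVec k l j) := by
    intro l j
    rcases le_total l j with hlj | hlj
    · have h1 := LinearMap.congr_fun (congrFun (h l j hlj).2 (vertexPt k 0)) (edgeVec k 0 1)
      simpa only [pullForm, LinearMap.comp_apply, edgePt_zero, edgeLin_edgeVec] using h1
    · have h1 := LinearMap.congr_fun (congrFun (h j l hlj).2 (vertexPt k 1)) (edgeVec k 0 1)
      simp only [pullForm, LinearMap.comp_apply, edgePt_one, edgeLin_edgeVec] at h1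
      rw [edgeVec_swap l j, map_neg, map_neg, h1]
  have hW : ∀ l, ω (vertexPt k l) = η (vertexPt k l) := fun l => by
    ext v
    rw [tangent_decomp l v, map_sum, map_sum]
    simp only [map_smul, hE]
  obtain ⟨F, hF'⟩ := hf
  obtain ⟨G, hG'⟩ := hg
  obtain ⟨W, hW'⟩ := hω
  obtain ⟨H, hH'⟩ := hη
  constructor
  · funext t
    have h1 := affine_zero_aux (F - G) (fun i => by
      have h2 := hF i
      rw [hF', hG'] at h2
      exact sub_eq_zero.mpr h2) t.1 t.2
    rw [hF', hG']
    exact sub_eq_zero.mp h1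
  · funext t
    have h1 := affine_zero_aux (W - H) (fun i => by
      have h2 := hW i
      rw [hW', hH'] at h2
      exact sub_eq_zero.mpr h2) t.1 t.2
    rw [hW', hH']
    exact sub_eq_zero.mp h1
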